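/- (Alternating-group substitution cipher.) Let M be a finite alphabet with |M| = N ≥ 3, probability distribution P_M, and key space K = Alt(M), the alternating group. Set R₂ = 1 minus the sum of the three smallest symbol probabilities (i.e., if P_M(1) ≥ … ≥ P_M(N), R₂ = 1 − P_M(N) − P_M(N−1) − P_M(N−2) = Σ_{j=1}^{N−3} P_M(j)). Then for every message length L: log(2) · R₂^L ≤ H(K | M^L C^L) ≤ log(N!/2) · |K_max| · R₂^L, where K_max (the set of maximal keys) consists exactly of the 3-cycles. -/

import Mathlib

open scoped Classical

noncomputable section

/-- Probability of a word under the i.i.d. extension of the symbol distribution `P`. -/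
def wordP {M : Type*} (P : M → ℝ) {L : ℕ} (m : Fin L → M) : ℝ := ∏ l, P (m l)

/-- Number of keys in `K` mapping the message `m` (letterwise) to the cryptogram `c`. -/
def keyCount {M : Type*} (K : Subgroup (Equiv.Perm M)) {L : ℕ} (m c : Fin L → M) : ℕ :=
  Nat.card {k : Equiv.Perm M // k ∈ K ∧ ∀ l, k (m l) = c l}

/-- The key appearance equivocation `H(K | M^L C^L)` for the substitution cipher with
key space `K` (keys uniform), symbol distribution `P` and message length `L`. -/
def kae {M : Type*} [Fintype M] (K : Subgroup (Equiv.Perm M)) (P : M → ℝ) (L : ℕ) : ℝ :=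
  ∑ m : Fin L → M, ∑ c : Fin L → M,
    wordP P m * (keyCount K m c : ℝ) / (Nat.card K : ℝ) * Real.log (keyCount K m c)

/-- The fixed set `F(π)` of a permutation. -/
def fixedSet {M : Type*} [Fintype M] [DecidableEq M] (π : Equiv.Perm M) : Finset M :=
  Finset.univ.filter fun j => π j = j

/-- `P_π`: total probability of the fixed set of `π`. -/
def Pfix {M : Type*} [Fintype M] [DecidableEq M] (P : M → ℝ) (π : Equiv.Perm M) : ℝ :=
  ∑ j ∈ fixedSet π, P j

/-- A key is maximal if it is a non-identity element of `K` whose fixed set is maximal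
under inclusion among fixed sets of non-identity elements of `K`. -/
def IsMaximalKey {M : Type*} [Fintype M] [DecidableEq M] (K : Subgroup (Equiv.Perm M))
    (π : Equiv.Perm M) : Prop :=
  π ∈ K ∧ π ≠ 1 ∧ ∀ τ ∈ K, τ ≠ 1 → fixedSet π ⊆ fixedSet τ → fixedSet τ = fixedSet π

/-- The stabilizer of the message `m` in `K` is nontrivial. -/
def hasNontrivialStab {M : Type*} (K : Subgroup (Equiv.Perm M)) {L : ℕ} (m : Fin L → M) : Prop :=
  ∃ k ∈ K, k ≠ 1 ∧ ∀ l, k (m l) = m l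

/-- Total probability of length-`L` messages with a nontrivial stabilizer in `K`. -/
def probNontrivial {M : Type*} [Fintype M] (K : Subgroup (Equiv.Perm M)) (P : M → ℝ)
    (L : ℕ) : ℝ :=
  ∑ m : Fin L → M, if hasNontrivialStab K m then wordP P m else 0

theorem aux_mem_fixedSet {M : Type*} [Fintype M] [DecidableEq M] (π : Equiv.Perm M) (j : M) :
    j ∈ fixedSet π ↔ π j = j := by simp [fixedSet]

theorem aux_three_le {M : Type*} [Fintype M] [DecidableEq M] (π : Equiv.Perm M)
    (h : π ∈ alternatingGroup M) (h1 : π ≠ 1) : 2 < π.support.card := by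
  have h2 := Equiv.Perm.two_le_card_support_of_ne_one h1
  rcases h2.lt_or_eq with h3 | h3
  · exact h3
  · exfalso
    have := (Equiv.Perm.card_support_eq_two.mp h3.symm).sign_eq
    rw [Equiv.Perm.mem_alternatingGroup.mp h] at this
    exact absurd this (by decide)

theorem aux_exists_three {M : Type*} [Fintype M] [DecidableEq M] (π : Equiv.Perm M)
    (h : π ∈ alternatingGroup M) (h1 : π ≠ 1) :
    ∃ τ : Equiv.Perm M, τ.IsThreeCycle ∧ fixedSet π ⊆ fixedSet τ := by
  obtain ⟨a, ha, b, hb, c, hc, hab, hac, hbc⟩ := Finset.two_lt_card.mp (aux_three_le π h h1)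
  refine ⟨_, Equiv.Perm.isThreeCycle_swap_mul_swap_same hab hac hbc, ?_⟩
  intro j hj
  rw [aux_mem_fixedSet] at hj ⊢
  rw [Equiv.Perm.mem_support] at ha hb hc
  have h1 : j ≠ a := by rintro rfl; exact ha hj
  have h2 : j ≠ b := by rintro rfl; exact hb hj
  have h3 : j ≠ c := by rintro rfl; exact hc hj
  rw [Equiv.Perm.mul_apply, Equiv.swap_apply_of_ne_of_ne h1 h3,
    Equiv.swap_apply_of_ne_of_ne h1 h2]

theorem aux_fixed_compl {M : Type*} [Fintype M] [DecidableEq M] (π : Equiv.Perm M) :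
    fixedSet π = π.supportᶜ := by
  ext j; simp [fixedSet]

theorem aux_max_iff {M : Type*} [Fintype M] [DecidableEq M] (π : Equiv.Perm M) :
    IsMaximalKey (alternatingGroup M) π ↔ π.IsThreeCycle := by
  constructor
  · rintro ⟨h, h1, hm⟩
    obtain ⟨τ, hτ, hs⟩ := aux_exists_three π h h1
    have := hm τ hτ.mem_alternatingGroup hτ.ne_one hs
    rw [aux_fixed_compl, aux_fixed_compl, compl_inj_iff] at this
    rw [← card_support_eq_three_iff, ← this, hτ.card_support]
  · intro h
    refine ⟨h.mem_alternatingGroup, h.ne_one, fun τ hτ h1 hs => ?_⟩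
    rw [aux_fixed_compl, aux_fixed_compl] at hs ⊢
    rw [Finset.compl_subset_compl] at hs
    rw [Finset.eq_of_subset_of_card_le hs (by
      rw [h.card_support]; exact aux_three_le τ hτ h1)]

theorem aux_keyCount_eq {M : Type*} (K : Subgroup (Equiv.Perm M)) {L : ℕ}
    (m c : Fin L → M) (h : keyCount K m c ≠ 0) : keyCount K m c = keyCount K m m := by
  unfold keyCount at *
  obtain ⟨⟨k0, hk0, hk⟩⟩ := (Nat.card_ne_zero.mp h).1
  refine Nat.card_congr ⟨fun k => ⟨k0⁻¹ * k.1, K.mul_mem (K.inv_mem hk0) k.2.1, fun l => ?_⟩,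
    fun k => ⟨k0 * k.1, K.mul_mem hk0 k.2.1, fun l => ?_⟩, fun k => ?_, fun k => ?_⟩
  · rw [Equiv.Perm.mul_apply, k.2.2 l, ← hk l]; simp
  · rw [Equiv.Perm.mul_apply, k.2.2 l, hk l]
  · simp
  · simp

theorem aux_sum_keyCount {M : Type*} [Fintype M] (K : Subgroup (Equiv.Perm M)) {L : ℕ}
    (m : Fin L → M) : ∑ c : Fin L → M, keyCount K m c = Nat.card K := by
  unfold keyCount
  rw [← Nat.card_sigma]
  refine Nat.card_congr ⟨fun x => ⟨x.2.1, x.2.2.1⟩, fun k => ⟨fun l => k.1 (m l), k.1, k.2,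
    fun l => rfl⟩, ?_, fun k => rfl⟩
  rintro ⟨c, k, hk, h⟩
  obtain rfl : (fun l => k (m l)) = c := funext h
  rfl

theorem aux_kae_eq {M : Type*} [Fintype M] (K : Subgroup (Equiv.Perm M)) (P : M → ℝ) (L : ℕ) :
    kae K P L = ∑ m : Fin L → M, wordP P m * Real.log (keyCount K m m) := by
  unfold kae
  refine Finset.sum_congr rfl fun m _ => ?_
  have hK : (Nat.card K : ℝ) ≠ 0 := by
    exact_mod_cast (Nat.card_pos (α := K)).ne'
  have h1 : ∀ c : Fin L → M, wordP P m * (keyCount K m c : ℝ) / (Nat.card K : ℝ) *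
      Real.log (keyCount K m c) =
      (keyCount K m c : ℝ) * (wordP P m / (Nat.card K : ℝ) * Real.log (keyCount K m m)) := by
    intro c
    by_cases h : keyCount K m c = 0
    · simp [h]
    · rw [aux_keyCount_eq K m c h]; ring
  rw [Finset.sum_congr rfl fun c _ => h1 c, ← Finset.sum_mul, ← Nat.cast_sum,
    aux_sum_keyCount]
  field_simp

theorem aux_sum_word {M : Type*} [Fintype M] (P : M → ℝ) (L : ℕ) (s : Finset M) :
    ∑ m : Fin L → M, (if ∀ l, m l ∈ s then wordP P m else 0) = (∑ j ∈ s, P j) ^ L := by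
  rw [Finset.sum_pow', ← Finset.sum_filter]
  refine Finset.sum_congr ?_ fun m _ => rfl
  ext m; simp

theorem aux_word_nonneg {M : Type*} (P : M → ℝ) (hP : ∀ x, 0 ≤ P x) {L : ℕ} (m : Fin L → M) :
    0 ≤ wordP P m := Finset.prod_nonneg fun _ _ => hP _

theorem aux_two_le {M : Type*} [Finite M] (K : Subgroup (Equiv.Perm M)) {L : ℕ}
    (m : Fin L → M) (k : Equiv.Perm M) (hk : k ∈ K) (h1 : k ≠ 1) (h : ∀ l, k (m l) = m l) :
    2 ≤ keyCount K m m := by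
  unfold keyCount
  have : Nontrivial {k : Equiv.Perm M // k ∈ K ∧ ∀ l, k (m l) = m l} :=
    ⟨⟨k, hk, h⟩, ⟨1, K.one_mem, fun _ => rfl⟩, fun he => h1 (congrArg Subtype.val he)⟩
  exact Finite.one_lt_card

theorem aux_le_card {M : Type*} [Finite M] (K : Subgroup (Equiv.Perm M)) {L : ℕ}
    (m : Fin L → M) : keyCount K m m ≤ Nat.card K :=
  Nat.card_le_card_of_injective (fun k => (⟨k.1, k.2.1⟩ : K)) fun a b h =>
    Subtype.ext (congrArg (fun x : K => x.1) h)

theorem aux_one_le {M : Type*} [Finite M] (K : Subgroup (Equiv.Perm M)) {L : ℕ}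
    (m : Fin L → M) : 1 ≤ keyCount K m m := by
  unfold keyCount
  have : Nonempty {k : Equiv.Perm M // k ∈ K ∧ ∀ l, k (m l) = m l} :=
    ⟨⟨1, K.one_mem, fun _ => rfl⟩⟩
  exact Nat.card_pos

theorem aux_sum_fixed {M : Type*} [Fintype M] [DecidableEq M] (P : M → ℝ)
    (hsum : ∑ x, P x = 1) (π : Equiv.Perm M) :
    ∑ j ∈ fixedSet π, P j = 1 - ∑ j ∈ π.support, P j := by
  rw [aux_fixed_compl, ← hsum, ← Finset.sum_compl_add_sum π.support]; ring

theorem aux_sum_le {M : Type*} [Fintype M] [DecidableEq M] (P : M → ℝ)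
    (hsum : ∑ x, P x = 1) (c : ℝ)
    (hc : IsLeast {y : ℝ | ∃ i j k : M, i ≠ j ∧ i ≠ k ∧ j ≠ k ∧ P i + P j + P k = y} c)
    (π : Equiv.Perm M) (h : π.IsThreeCycle) : ∑ j ∈ fixedSet π, P j ≤ 1 - c := by
  rw [aux_sum_fixed P hsum]
  obtain ⟨x, y, z, hxy, hxz, hyz, hs⟩ := Finset.card_eq_three.mp h.card_support
  have := hc.2 ⟨x, y, z, hxy, hxz, hyz, rfl⟩
  rw [hs, Finset.sum_insert (by simp [hxy, hxz]), Finset.sum_pair hyz]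
  linarith

/-- Alternating-group substitution cipher:
`log 2 · R₂^L ≤ H(K | M^L C^L) ≤ log(N!/2) · |K_max| · R₂^L` with
`R₂ = 1` minus the sum of the three smallest symbol probabilities, and `K_max` consisting
exactly of the 3-cycles. -/
theorem kae_bounds_alternating_substitution {M : Type*} [Fintype M] [DecidableEq M]
    (hN : 3 ≤ Fintype.card M) (P : M → ℝ)
    (hP : ∀ x, 0 ≤ P x) (hsum : ∑ x, P x = 1)
    (c : ℝ)
    (hc : IsLeast {y : ℝ | ∃ i j k : M, i ≠ j ∧ i ≠ k ∧ j ≠ k ∧ P i + P j + P k = y} c)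
    (L : ℕ) :
    (∀ π : Equiv.Perm M, IsMaximalKey (alternatingGroup M) π ↔ π.IsThreeCycle) ∧
    Real.log 2 * (1 - c) ^ L ≤ kae (alternatingGroup M) P L ∧
    kae (alternatingGroup M) P L ≤
      Real.log ((Nat.factorial (Fintype.card M) : ℝ) / 2) *
        (Nat.card {π : Equiv.Perm M // IsMaximalKey (alternatingGroup M) π}) *
        (1 - c) ^ L := by
  refine ⟨aux_max_iff, ?_, ?_⟩
  · rw [aux_kae_eq]
    obtain ⟨i, j, k, hij, hik, hjk, hs⟩ := hc.1
    have h3 := Equiv.Perm.isThreeCycle_swap_mul_swap_same hij hik hjk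
    set τ := Equiv.swap i j * Equiv.swap i k with hτ
    have hfix : ∀ x, x ∉ ({i, j, k} : Finset M) → τ x = x := by
      intro x hx
      simp only [Finset.mem_insert, Finset.mem_singleton, not_or] at hx
      rw [hτ, Equiv.Perm.mul_apply, Equiv.swap_apply_of_ne_of_ne hx.1 hx.2.2,
        Equiv.swap_apply_of_ne_of_ne hx.1 hx.2.1]
    have hR : 1 - c = ∑ x ∈ ({i, j, k} : Finset M)ᶜ, P x := by
      have := Finset.sum_compl_add_sum ({i, j, k} : Finset M) P
      rw [hsum, Finset.sum_insert (by simp [hij, hik]), Finset.sum_pair hjk] at this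
      linarith
    rw [hR, ← aux_sum_word, Finset.mul_sum]
    refine Finset.sum_le_sum fun m _ => ?_
    split_ifs with h
    · rw [mul_comm]
      refine mul_le_mul_of_nonneg_left ?_ (aux_word_nonneg P hP m)
      refine Real.log_le_log (by norm_num) ?_
      exact_mod_cast aux_two_le _ m τ h3.mem_alternatingGroup h3.ne_one
        fun l => hfix _ (Finset.mem_compl.mp (h l))
    · rw [mul_zero]
      refine mul_nonneg (aux_word_nonneg P hP m) (Real.log_natCast_nonneg _)
  · rw [aux_kae_eq]
    have hnt : Nontrivial M := Fintype.one_lt_card_iff_nontrivial.mp (by omega)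
    have hcard : (Nat.factorial (Fintype.card M) : ℝ) / 2 = Nat.card (alternatingGroup M) := by
      have := two_mul_nat_card_alternatingGroup (α := M)
      rw [Nat.card_perm, Nat.card_eq_fintype_card (α := M)] at this
      rw [← this]; push_cast; ring
    rw [hcard]
    set T := Finset.univ.filter fun π : Equiv.Perm M => IsMaximalKey (alternatingGroup M) π
      with hT
    have hTc : Nat.card {π : Equiv.Perm M // IsMaximalKey (alternatingGroup M) π} = T.card := by
      rw [Nat.card_eq_fintype_card, Fintype.card_subtype]
    rw [hTc]
    set C := Real.log (Nat.card (alternatingGroup M)) with hC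
    have hC0 : 0 ≤ C := Real.log_natCast_nonneg _
    have key : ∀ m : Fin L → M, wordP P m * Real.log (keyCount (alternatingGroup M) m m) ≤
        C * ∑ π ∈ T, (if ∀ l, m l ∈ fixedSet π then wordP P m else 0) := by
      intro m
      have hw := aux_word_nonneg P hP m
      have hnn : ∀ π ∈ T, 0 ≤ (if ∀ l, m l ∈ fixedSet π then wordP P m else 0) := by
        intro π _; split_ifs <;> simp [hw]
      by_cases h : keyCount (alternatingGroup M) m m = 1
      · rw [h]
        simpa using mul_nonneg hC0 (Finset.sum_nonneg hnn)
      · have h1 := aux_one_le (alternatingGroup M) m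
        have h2 : 1 < keyCount (alternatingGroup M) m m := by omega
        unfold keyCount at h2
        have := Finite.one_lt_card_iff_nontrivial.mp h2
        obtain ⟨⟨k, hk, hkm⟩, hne⟩ := exists_ne
          (⟨1, Subgroup.one_mem _, fun _ => rfl⟩ :
            {k : Equiv.Perm M // k ∈ alternatingGroup M ∧ ∀ l, k (m l) = m l})
        have hk1 : k ≠ 1 := fun he => hne (Subtype.ext he)
        obtain ⟨τ, hτ, hsub⟩ := aux_exists_three k hk hk1
        have hle := Finset.single_le_sum hnn
          (show τ ∈ T by simp [hT, aux_max_iff, hτ])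
        rw [if_pos fun l => hsub ((aux_mem_fixedSet _ _).mpr (hkm l))] at hle
        rw [mul_comm]
        refine mul_le_mul ?_ hle hw hC0
        refine Real.log_le_log (by exact_mod_cast h1) ?_
        exact_mod_cast aux_le_card (alternatingGroup M) m
    refine (Finset.sum_le_sum fun m _ => key m).trans ?_
    rw [← Finset.mul_sum, Finset.sum_comm, mul_assoc]
    refine mul_le_mul_of_nonneg_left ?_ hC0
    rw [← nsmul_eq_mul]
    refine Finset.sum_le_card_nsmul _ _ _ fun π hπ => ?_
    have hword : (∑ m : Fin L → M, if ∀ l, m l ∈ fixedSet π then wordP P m else 0) =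
        (∑ j ∈ fixedSet π, P j) ^ L := by
      rw [← aux_sum_word]
      refine Finset.sum_congr rfl fun m _ => ?_
      congr
    rw [hword]
    refine pow_le_pow_left₀ (Finset.sum_nonneg fun _ _ => hP _) ?_ L
    refine aux_sum_le P hsum c hc π ((aux_max_iff π).mp ?_)
    simpa [hT] using hπ
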